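/- Let σ > 0 and N ≥ 1. Among nondecreasing functions with values in [m, M], equation (C⁻) admits a minimal solution l*, i.e. a nondecreasing solution satisfying l*(x) ≤ L(x) for every x ∈ ℝ whenever L is a nondecreasing solution of (C⁻) with values in [m, M]. This minimal solution is not constant, and every solution F of equation (E) with values in [m, M] satisfies F(x) ≥ l*(x) for all x ∈ ℝ. -/

import Mathlib

open MeasureTheory Filter Set

/-- Centered Gaussian density with variance `σ²`. -/
noncomputable def gq (σ z : ℝ) : ℝ :=
  Real.exp (-(z ^ 2) / (2 * σ ^ 2)) / (σ * Real.sqrt (2 * Real.pi))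

/-- The averaged kernel `q̄(σ,x,z)`. -/
noncomputable def gqbar (σ x z : ℝ) : ℝ :=
  if x = 0 then gq σ z else (1 / x) * ∫ y in (0:ℝ)..x, gq σ (y - z)

/-- `Φ⁺(y) = E[V·1_{V>y}]`. -/
noncomputable def Phip {Ω : Type*} [MeasurableSpace Ω] (P : Measure Ω) (V : Ω → ℝ) (y : ℝ) : ℝ :=
  ∫ ω in {ω | V ω > y}, V ω ∂P

/-- `Π⁺(y) = P(V > y)`. -/
noncomputable def Pip {Ω : Type*} [MeasurableSpace Ω] (P : Measure Ω) (V : Ω → ℝ) (y : ℝ) : ℝ :=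
  (P {ω | V ω > y}).toReal

/-- `Φ⁻(y) = E[V·1_{V≤y}]`. -/
noncomputable def Phim {Ω : Type*} [MeasurableSpace Ω] (P : Measure Ω) (V : Ω → ℝ) (y : ℝ) : ℝ :=
  ∫ ω in {ω | V ω ≤ y}, V ω ∂P

/-- `Π⁻(y) = P(V ≤ y)`. -/
noncomputable def Pim {Ω : Type*} [MeasurableSpace Ω] (P : Measure Ω) (V : Ω → ℝ) (y : ℝ) : ℝ :=
  (P {ω | V ω ≤ y}).toReal

/-- `Ψ⁺ = Φ⁺/Π⁺`. -/
noncomputable def Psip {Ω : Type*} [MeasurableSpace Ω] (P : Measure Ω) (V : Ω → ℝ) (y : ℝ) : ℝ :=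
  Phip P V y / Pip P V y

/-- `Ψ⁻ = Φ⁻/Π⁻`. -/
noncomputable def Psim {Ω : Type*} [MeasurableSpace Ω] (P : Measure Ω) (V : Ω → ℝ) (y : ℝ) : ℝ :=
  Phim P V y / Pim P V y

/-- `φ⁺_g`. -/
noncomputable def phip {Ω : Type*} [MeasurableSpace Ω] (P : Measure Ω) (V : Ω → ℝ)
    (σ : ℝ) (g : ℝ → ℝ) (x : ℝ) : ℝ :=
  (∫ z, Phip P V (g z) * gq σ (x - z)) / (∫ z, Pip P V (g z) * gq σ (x - z))

/-- `φ⁻_g`. -/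
noncomputable def phim {Ω : Type*} [MeasurableSpace Ω] (P : Measure Ω) (V : Ω → ℝ)
    (σ : ℝ) (g : ℝ → ℝ) (x : ℝ) : ℝ :=
  (∫ z, Phim P V (g z) * gq σ (x - z)) / (∫ z, Pim P V (g z) * gq σ (x - z))

/-- `φ_g`, equal to `φ⁺_g` on `[0,∞)` and `φ⁻_g` on `(−∞,0)`. -/
noncomputable def phig {Ω : Type*} [MeasurableSpace Ω] (P : Measure Ω) (V : Ω → ℝ)
    (σ : ℝ) (g : ℝ → ℝ) (x : ℝ) : ℝ :=
  if 0 ≤ x then phip P V σ g x else phim P V σ g x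

/-- The interior of the support of the law of `V` is `(m, M)` (with `V` bounded). -/
def SuppIoo {Ω : Type*} [MeasurableSpace Ω] (P : Measure Ω) (V : Ω → ℝ) (m M : ℝ) : Prop :=
  m < M ∧ (∀ᵐ ω ∂P, V ω ∈ Set.Icc m M) ∧
    (∀ y < M, 0 < P {ω | V ω > y}) ∧ (∀ y, m < y → 0 < P {ω | V ω ≤ y})

/-- Equation (E). -/
def SolvesE {Ω : Type*} [MeasurableSpace Ω] (P : Measure Ω) (V : Ω → ℝ)
    (σ : ℝ) (N : ℕ) (F : ℝ → ℝ) : Prop :=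
  ∀ x : ℝ, F x =
    ∫ z, ((1 / (N:ℝ)) * gq σ (x - z) + (((N:ℝ) - 1) / (N:ℝ)) * gqbar σ x z) * phig P V σ F z

/-- Equation (C⁻). -/
def SolvesCm {Ω : Type*} [MeasurableSpace Ω] (P : Measure Ω) (V : Ω → ℝ)
    (σ : ℝ) (N : ℕ) (l : ℝ → ℝ) : Prop :=
  ∀ x : ℝ, l x =
    (∫ ω, V ω ∂P) *
      (∫ z in Set.Ioi (0:ℝ),
        ((1 / (N:ℝ)) * gq σ (x - z) + (((N:ℝ) - 1) / (N:ℝ)) * gqbar σ x z)) +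
    ∫ z in Set.Iio (0:ℝ),
      ((1 / (N:ℝ)) * gq σ (x - z) + (((N:ℝ) - 1) / (N:ℝ)) * gqbar σ x z) *
        ∫ y, Psim P V (l y) * gq σ (z - y)

/-! ## Gaussian kernel -/

lemma gq_eq_pdf {σ : ℝ} (hσ : 0 < σ) (x z : ℝ) :
    gq σ (x - z) = ProbabilityTheory.gaussianPDFReal x (Real.toNNReal (σ ^ 2)) z := by
  have h : Real.sqrt (2 * Real.pi * σ ^ 2) = σ * Real.sqrt (2 * Real.pi) := by
    rw [Real.sqrt_mul (by positivity), Real.sqrt_sq hσ.le, mul_comm]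
  have h2 : (x - z) ^ 2 = (z - x) ^ 2 := by ring
  simp only [gq, ProbabilityTheory.gaussianPDFReal, Real.coe_toNNReal _ (sq_nonneg σ)]
  rw [h, h2, div_eq_inv_mul]

lemma gq_pos {σ : ℝ} (hσ : 0 < σ) (z : ℝ) : 0 < gq σ z := by
  unfold gq; positivity

lemma gq_cont (σ : ℝ) : Continuous (gq σ) := by
  unfold gq; fun_prop

lemma gq_integrable {σ : ℝ} (hσ : 0 < σ) (x : ℝ) : Integrable (fun z => gq σ (x - z)) := by
  simp_rw [gq_eq_pdf hσ]
  exact ProbabilityTheory.integrable_gaussianPDFReal _ _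

lemma gq_integral {σ : ℝ} (hσ : 0 < σ) (x : ℝ) : ∫ z, gq σ (x - z) = 1 := by
  simp_rw [gq_eq_pdf hσ]
  apply ProbabilityTheory.integral_gaussianPDFReal_eq_one
  intro h
  rw [Real.toNNReal_eq_zero] at h
  have : 0 < σ ^ 2 := by positivity
  linarith

/-- bounded measurable functions -/
def BM (h : ℝ → ℝ) : Prop := Measurable h ∧ ∃ C, ∀ x, |h x| ≤ C

lemma BM.const (c : ℝ) : BM (fun _ => c) := ⟨measurable_const, |c|, fun _ => le_rfl⟩

/-- Gaussian smoothing -/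
noncomputable def GG (σ : ℝ) (h : ℝ → ℝ) (x : ℝ) : ℝ := ∫ z, gq σ (x - z) * h z

lemma GG_integrable {σ : ℝ} (hσ : 0 < σ) {h : ℝ → ℝ} (hh : BM h) (x : ℝ) :
    Integrable (fun z => gq σ (x - z) * h z) := by
  obtain ⟨hm, C, hC⟩ := hh
  exact (gq_integrable hσ x).mul_bdd (c := C) hm.aestronglyMeasurable
    (Eventually.of_forall (fun z => by simpa using hC z))

lemma GG_const {σ : ℝ} (hσ : 0 < σ) (c x : ℝ) : GG σ (fun _ => c) x = c := by
  unfold GG; rw [integral_mul_const, gq_integral hσ, one_mul]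

lemma GG_mono {σ : ℝ} (hσ : 0 < σ) {f g : ℝ → ℝ} (hf : BM f) (hg : BM g) (h : ∀ z, f z ≤ g z)
    (x : ℝ) : GG σ f x ≤ GG σ g x :=
  integral_mono (GG_integrable hσ hf x) (GG_integrable hσ hg x)
    (fun z => mul_le_mul_of_nonneg_left (h z) (gq_pos hσ _).le)

lemma GG_measurable {σ : ℝ} {h : ℝ → ℝ} (hh : Measurable h) : Measurable (GG σ h) := by
  have : Measurable (fun p : ℝ × ℝ => gq σ (p.1 - p.2) * h p.2) :=
    ((gq_cont σ).measurable.comp (measurable_fst.sub measurable_snd)).mul (hh.comp measurable_snd)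
  exact (StronglyMeasurable.integral_prod_right this.stronglyMeasurable).measurable

lemma GG_BM {σ : ℝ} (hσ : 0 < σ) {h : ℝ → ℝ} (hh : BM h) : BM (GG σ h) := by
  refine ⟨GG_measurable hh.1, ?_⟩
  obtain ⟨C, hC⟩ := hh.2
  refine ⟨C, fun x => abs_le.2 ⟨?_, ?_⟩⟩
  · rw [← GG_const hσ (-C) x]
    exact GG_mono hσ (BM.const _) hh (fun z => (abs_le.1 (hC z)).1) x
  · rw [← GG_const hσ C x]
    exact GG_mono hσ hh (BM.const _) (fun z => (abs_le.1 (hC z)).2) x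

lemma GG_eq (σ : ℝ) (h : ℝ → ℝ) (x : ℝ) : GG σ h x = ∫ u, gq σ u * h (x - u) := by
  unfold GG
  rw [← integral_sub_left_eq_self (fun u => gq σ u * h (x - u)) volume x]
  simp

lemma gq_integrable0 {σ : ℝ} (hσ : 0 < σ) : Integrable (gq σ) := by
  have := gq_integrable hσ 0
  have h2 := this.comp_neg
  simpa using h2

lemma gq_integral0 {σ : ℝ} (hσ : 0 < σ) : ∫ z, gq σ z = 1 := by
  have h := GG_eq σ (fun _ => 1) 0
  rw [GG_const hσ] at h
  simpa using h.symm

lemma GG_shift_integrable {σ : ℝ} (hσ : 0 < σ) {h : ℝ → ℝ} (hh : BM h) (x : ℝ) :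
    Integrable (fun u => gq σ u * h (x - u)) := by
  obtain ⟨hm, C, hC⟩ := hh
  exact (gq_integrable0 hσ).mul_bdd (c := C) (hm.comp (measurable_const.sub measurable_id)).aestronglyMeasurable
    (Eventually.of_forall (fun z => by simpa using hC _))

lemma GG_monotone {σ : ℝ} (hσ : 0 < σ) {h : ℝ → ℝ} (hh : BM h) (hmon : Monotone h) :
    Monotone (GG σ h) := by
  intro x y hxy
  rw [GG_eq, GG_eq]
  exact integral_mono (GG_shift_integrable hσ hh x) (GG_shift_integrable hσ hh y)
    (fun u => mul_le_mul_of_nonneg_left (hmon (by linarith)) (gq_pos hσ _).le)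

lemma GG_tendsto {σ : ℝ} (hσ : 0 < σ) {h : ℝ → ℝ} (hh : BM h) {l : Filter ℝ}
    [l.IsCountablyGenerated] (hl : ∀ u : ℝ, Tendsto (fun x => x - u) l l) {c : ℝ}
    (hc : Tendsto h l (nhds c)) : Tendsto (GG σ h) l (nhds c) := by
  have e : GG σ h = fun x => ∫ u, gq σ u * h (x - u) := funext (GG_eq σ h)
  rw [e]
  have ec : c = ∫ u, gq σ u * c := by rw [integral_mul_const, gq_integral0 hσ, one_mul]
  conv => rhs; rw [ec]
  obtain ⟨C, hC⟩ := hh.2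
  refine tendsto_integral_filter_of_dominated_convergence (fun u => gq σ u * C) ?_ ?_
    ((gq_integrable0 hσ).mul_const C) ?_
  · exact Eventually.of_forall fun x => (GG_shift_integrable hσ hh x).aestronglyMeasurable
  · refine Eventually.of_forall fun x => Eventually.of_forall fun u => ?_
    rw [Real.norm_eq_abs, abs_mul, abs_of_pos (gq_pos hσ u)]
    exact mul_le_mul_of_nonneg_left (hC _) (gq_pos hσ u).le
  · exact Eventually.of_forall fun u => (hc.comp (hl u)).const_mul _

/-! ## The averaged kernel -/

lemma gqbar_eq (σ x z : ℝ) : gqbar σ x z = ∫ t in (0:ℝ)..1, gq σ (x * t - z) := by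
  unfold gqbar
  split_ifs with h
  · subst h
    simp [gq]
  · rw [intervalIntegral.integral_comp_mul_left (fun y => gq σ (y - z)) h]
    simp

/-- The kernel -/
noncomputable def KK (σ : ℝ) (N : ℕ) (x z : ℝ) : ℝ :=
  (1 / (N:ℝ)) * gq σ (x - z) + (((N:ℝ) - 1) / (N:ℝ)) * gqbar σ x z

lemma gqbar_nonneg {σ : ℝ} (hσ : 0 < σ) (x z : ℝ) : 0 ≤ gqbar σ x z := by
  rw [gqbar_eq]
  exact intervalIntegral.integral_nonneg zero_le_one (fun t _ => (gq_pos hσ _).le)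

lemma gqbar_measurable (σ : ℝ) : Measurable (fun p : ℝ × ℝ => gqbar σ p.1 p.2) := by
  simp_rw [gqbar_eq, intervalIntegral.integral_of_le zero_le_one]
  have : Measurable (fun p : (ℝ × ℝ) × ℝ => gq σ (p.1.1 * p.2 - p.1.2)) :=
    (gq_cont σ).measurable.comp (by fun_prop)
  exact (StronglyMeasurable.integral_prod_right this.stronglyMeasurable).measurable

lemma KK_measurable (σ : ℝ) (N : ℕ) : Measurable (fun p : ℝ × ℝ => KK σ N p.1 p.2) := by
  unfold KK
  exact (((gq_cont σ).measurable.comp (measurable_fst.sub measurable_snd)).const_mul _).add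
    ((gqbar_measurable σ).const_mul _)

lemma KK_pos {σ : ℝ} (hσ : 0 < σ) {N : ℕ} (hN : 1 ≤ N) (x z : ℝ) : 0 < KK σ N x z := by
  have h1 : (1:ℝ) ≤ N := by exact_mod_cast hN
  have h2 : 0 ≤ ((N:ℝ) - 1) / (N:ℝ) := div_nonneg (by linarith) (by linarith)
  have h3 : 0 < 1 / (N:ℝ) := by positivity
  have := mul_pos h3 (gq_pos hσ (x - z))
  have := mul_nonneg h2 (gqbar_nonneg hσ x z)
  unfold KK; linarith

lemma prod_integrable {σ : ℝ} (hσ : 0 < σ) {h : ℝ → ℝ} (hh : BM h) (x : ℝ) :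
    Integrable (fun p : ℝ × ℝ => gq σ (x * p.2 - p.1) * h p.1)
      (volume.prod (volume.restrict (Ioc (0:ℝ) 1))) := by
  have hmeas : Measurable (fun p : ℝ × ℝ => gq σ (x * p.2 - p.1) * h p.1) :=
    ((gq_cont σ).measurable.comp (by fun_prop)).mul (hh.1.comp measurable_fst)
  rw [integrable_prod_iff' hmeas.aestronglyMeasurable]
  refine ⟨Eventually.of_forall fun t => GG_integrable hσ hh (x * t), ?_⟩
  have habs : BM (fun z => |h z|) := ⟨hh.1.abs, by
    obtain ⟨C, hC⟩ := hh.2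
    exact ⟨C, fun z => by simpa using hC z⟩⟩
  have e : (fun y => ∫ z, ‖gq σ (x * y - z) * h z‖) = fun y => GG σ (fun z => |h z|) (x * y) := by
    funext y
    unfold GG
    congr 1; funext z
    rw [Real.norm_eq_abs, abs_mul, abs_of_pos (gq_pos hσ _)]
  show Integrable (fun y => ∫ z, ‖gq σ (x * y - z) * h z‖) _
  rw [e]
  obtain ⟨hm, C, hC⟩ := GG_BM hσ habs
  exact Integrable.of_bound (hm.comp (measurable_const.mul measurable_id)).aestronglyMeasurable C
    (Eventually.of_forall fun y => hC _)

lemma gqbar_mul_eq (σ : ℝ) (h : ℝ → ℝ) (x z : ℝ) :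
    gqbar σ x z * h z = ∫ t in Ioc (0:ℝ) 1, gq σ (x * t - z) * h z := by
  rw [gqbar_eq, intervalIntegral.integral_of_le zero_le_one, integral_mul_const]

lemma gqbar_mul_integrable {σ : ℝ} (hσ : 0 < σ) {h : ℝ → ℝ} (hh : BM h) (x : ℝ) :
    Integrable (fun z => gqbar σ x z * h z) := by
  simp_rw [gqbar_mul_eq]
  exact (prod_integrable hσ hh x).integral_prod_left

lemma gqbar_mul_integral {σ : ℝ} (hσ : 0 < σ) {h : ℝ → ℝ} (hh : BM h) (x : ℝ) :
    ∫ z, gqbar σ x z * h z = ∫ t in Ioc (0:ℝ) 1, GG σ h (x * t) := by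
  simp_rw [gqbar_mul_eq]
  exact integral_integral_swap (prod_integrable hσ hh x)

/-- The operator -/
noncomputable def AA (σ : ℝ) (N : ℕ) (h : ℝ → ℝ) (x : ℝ) : ℝ := ∫ z, KK σ N x z * h z

lemma KK_mul (σ : ℝ) (N : ℕ) (h : ℝ → ℝ) (x : ℝ) : (fun z => KK σ N x z * h z) = fun z =>
    (1 / (N:ℝ)) * (gq σ (x - z) * h z) + (((N:ℝ) - 1) / (N:ℝ)) * (gqbar σ x z * h z) := by
  funext z; unfold KK; ring

lemma AA_integrable {σ : ℝ} (hσ : 0 < σ) (N : ℕ) {h : ℝ → ℝ} (hh : BM h) (x : ℝ) :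
    Integrable (fun z => KK σ N x z * h z) := by
  rw [KK_mul]
  exact ((GG_integrable hσ hh x).const_mul _).add ((gqbar_mul_integrable hσ hh x).const_mul _)

lemma AA_eq {σ : ℝ} (hσ : 0 < σ) (N : ℕ) {h : ℝ → ℝ} (hh : BM h) (x : ℝ) :
    AA σ N h x = (1 / (N:ℝ)) * GG σ h x +
      (((N:ℝ) - 1) / (N:ℝ)) * ∫ t in Ioc (0:ℝ) 1, GG σ h (x * t) := by
  unfold AA
  rw [KK_mul, integral_add ((GG_integrable hσ hh x).const_mul _)
    ((gqbar_mul_integrable hσ hh x).const_mul _), integral_const_mul, integral_const_mul,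
    gqbar_mul_integral hσ hh]
  rfl

lemma AA_const {σ : ℝ} (hσ : 0 < σ) {N : ℕ} (hN : 1 ≤ N) (c x : ℝ) :
    AA σ N (fun _ => c) x = c := by
  have : (N:ℝ) ≠ 0 := by positivity
  rw [AA_eq hσ N (BM.const c)]
  simp_rw [GG_const hσ]
  simp
  field_simp
  ring

lemma AA_mono {σ : ℝ} (hσ : 0 < σ) {N : ℕ} (hN : 1 ≤ N) {f g : ℝ → ℝ} (hf : BM f) (hg : BM g)
    (h : ∀ z, f z ≤ g z) (x : ℝ) : AA σ N f x ≤ AA σ N g x :=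
  integral_mono (AA_integrable hσ N hf x) (AA_integrable hσ N hg x)
    (fun z => mul_le_mul_of_nonneg_left (h z) (KK_pos hσ hN _ _).le)

lemma GG_scale_integrable {σ : ℝ} (hσ : 0 < σ) {h : ℝ → ℝ} (hh : BM h) (x : ℝ) :
    Integrable (fun t => GG σ h (x * t)) (volume.restrict (Ioc (0:ℝ) 1)) := by
  obtain ⟨hm, C, hC⟩ := GG_BM hσ hh
  exact Integrable.of_bound (hm.comp (measurable_const.mul measurable_id)).aestronglyMeasurable C
    (Eventually.of_forall fun y => hC _)

lemma AA_monotone {σ : ℝ} (hσ : 0 < σ) {N : ℕ} (hN : 1 ≤ N) {h : ℝ → ℝ} (hh : BM h)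
    (hmon : Monotone h) : Monotone (AA σ N h) := by
  intro x y hxy
  rw [AA_eq hσ N hh, AA_eq hσ N hh]
  have h1 : (1:ℝ) ≤ N := by exact_mod_cast hN
  have h2 : 0 ≤ ((N:ℝ) - 1) / (N:ℝ) := div_nonneg (by linarith) (by linarith)
  have h3 : 0 ≤ 1 / (N:ℝ) := by positivity
  refine add_le_add (mul_le_mul_of_nonneg_left (GG_monotone hσ hh hmon hxy) h3)
    (mul_le_mul_of_nonneg_left ?_ h2)
  refine setIntegral_mono_on (GG_scale_integrable hσ hh x) (GG_scale_integrable hσ hh y)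
    measurableSet_Ioc (fun t ht => GG_monotone hσ hh hmon ?_)
  exact mul_le_mul_of_nonneg_right hxy ht.1.le

lemma AA_tendsto {σ : ℝ} (hσ : 0 < σ) {N : ℕ} (hN : 1 ≤ N) {h : ℝ → ℝ} (hh : BM h) {l : Filter ℝ}
    [l.IsCountablyGenerated] (hl : ∀ u : ℝ, Tendsto (fun x => x - u) l l)
    (hl2 : ∀ t : ℝ, 0 < t → Tendsto (fun x => x * t) l l) {c : ℝ}
    (hc : Tendsto h l (nhds c)) : Tendsto (AA σ N h) l (nhds c) := by
  have e : AA σ N h = _ := funext (AA_eq hσ N hh)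
  rw [e]
  have hG := GG_tendsto hσ hh hl hc
  obtain ⟨C, hC⟩ := (GG_BM hσ hh).2
  have h2 : Tendsto (fun x => ∫ t in Ioc (0:ℝ) 1, GG σ h (x * t)) l
      (nhds (∫ t in Ioc (0:ℝ) 1, c)) := by
    refine tendsto_integral_filter_of_dominated_convergence (fun u => C) ?_ ?_
      (integrable_const _) ?_
    · exact Eventually.of_forall fun x => (GG_scale_integrable hσ hh x).aestronglyMeasurable
    · exact Eventually.of_forall fun x => Eventually.of_forall fun u => hC _
    · refine (ae_restrict_iff' measurableSet_Ioc).2 (Eventually.of_forall fun t ht => ?_)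
      exact hG.comp (hl2 t ht.1)
  have h3 := (hG.const_mul (1 / (N:ℝ))).add (h2.const_mul (((N:ℝ) - 1) / (N:ℝ)))
  have : (N:ℝ) ≠ 0 := by positivity
  convert h3 using 2
  simp
  field_simp
  ring

lemma AA_tendsto_top {σ : ℝ} (hσ : 0 < σ) {N : ℕ} (hN : 1 ≤ N) {h : ℝ → ℝ} (hh : BM h) {c : ℝ}
    (hc : Tendsto h atTop (nhds c)) : Tendsto (AA σ N h) atTop (nhds c) :=
  AA_tendsto hσ hN hh (fun u => tendsto_atTop_add_const_right _ (-u) tendsto_id)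
    (fun _ ht => tendsto_id.atTop_mul_const ht) hc

lemma AA_tendsto_bot {σ : ℝ} (hσ : 0 < σ) {N : ℕ} (hN : 1 ≤ N) {h : ℝ → ℝ} (hh : BM h) {c : ℝ}
    (hc : Tendsto h atBot (nhds c)) : Tendsto (AA σ N h) atBot (nhds c) :=
  AA_tendsto hσ hN hh (fun u => tendsto_atBot_add_const_right _ (-u) tendsto_id)
    (fun _ ht => tendsto_id.atBot_mul_const ht) hc

lemma AA_measurable {σ : ℝ} (hσ : 0 < σ) {N : ℕ} (hN : 1 ≤ N) (h : ℝ → ℝ) :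
    Measurable (AA σ N h) := by
  by_cases hm : AEStronglyMeasurable h volume
  · have e : AA σ N h = AA σ N (hm.mk h) := by
      funext x
      refine integral_congr_ae ?_
      filter_upwards [hm.ae_eq_mk] with z hz
      rw [hz]
    rw [e]
    have : Measurable (fun p : ℝ × ℝ => KK σ N p.1 p.2 * hm.mk h p.2) :=
      (KK_measurable σ N).mul (hm.stronglyMeasurable_mk.measurable.comp measurable_snd)
    exact (StronglyMeasurable.integral_prod_right this.stronglyMeasurable).measurable
  · have e : AA σ N h = fun _ => 0 := by
      funext x
      refine integral_non_aestronglyMeasurable fun hx => hm ?_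
      have hk : Measurable (fun z => (KK σ N x z)⁻¹) :=
        ((KK_measurable σ N).comp (measurable_const.prodMk measurable_id)).inv
      refine (hk.aestronglyMeasurable.mul hx).congr (Eventually.of_forall fun z => ?_)
      have := (KK_pos hσ hN x z).ne'
      simp only [Pi.mul_apply]
      field_simp
    rw [e]; exact measurable_const

lemma AA_pos {σ : ℝ} (hσ : 0 < σ) {N : ℕ} (hN : 1 ≤ N) {h : ℝ → ℝ} (hh : BM h) {c : ℝ}
    (h1 : ∀ z, c ≤ h z) (h2 : ∀ z, 0 ≤ z → c < h z) (x : ℝ) : c < AA σ N h x := by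
  have hi := AA_integrable hσ N hh x
  have hci := AA_integrable hσ N (BM.const c) x
  have : 0 < ∫ z, (KK σ N x z * h z - KK σ N x z * c) := by
    rw [integral_pos_iff_support_of_nonneg]
    · have hsub : Ici (0:ℝ) ⊆ Function.support (fun z => KK σ N x z * h z - KK σ N x z * c) := by
        intro z hz
        have := mul_lt_mul_of_pos_left (h2 z hz) (KK_pos hσ hN x z)
        simp only [Function.mem_support]; linarith
      refine lt_of_lt_of_le ?_ (measure_mono hsub)
      simp
    · intro z
      have := mul_le_mul_of_nonneg_left (h1 z) (KK_pos hσ hN x z).le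
      simpa using this
    · exact hi.sub hci
  rw [integral_sub hi hci] at this
  have e := AA_const hσ hN c x
  unfold AA at e ⊢
  linarith

lemma integral_four {a b c d : ℝ → ℝ} (ha : Integrable a) (hb : Integrable b) (hc : Integrable c)
    (hd : Integrable d) : ∫ z, (a z - b z - c z + d z) =
      (∫ z, a z) - (∫ z, b z) - (∫ z, c z) + ∫ z, d z := by
  have h1 : Integrable (fun z => a z - b z) := ha.sub hb
  have h2 : Integrable (fun z => a z - b z - c z) := h1.sub hc
  rw [integral_add h2 hd, integral_sub h1 hc, integral_sub ha hb]

/-- The Chebyshev correlation inequality against the Gaussian kernel. -/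
lemma GG_cheb {σ : ℝ} (hσ : 0 < σ) {f g : ℝ → ℝ} (hf : BM f) (hg : BM g)
    (hfg : ∀ a b, 0 ≤ (f a - f b) * (g a - g b)) (x : ℝ) :
    GG σ f x * GG σ g x ≤ GG σ (fun z => f z * g z) x := by
  have hp : BM (fun z => f z * g z) := by
    obtain ⟨C, hC⟩ := hf.2
    obtain ⟨D, hD⟩ := hg.2
    refine ⟨hf.1.mul hg.1, C * D, fun z => ?_⟩
    rw [abs_mul]
    exact mul_le_mul (hC z) (hD z) (abs_nonneg _) ((abs_nonneg _).trans (hC z))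
  have If := GG_integrable hσ hf x
  have Ig := GG_integrable hσ hg x
  have Ip := GG_integrable hσ hp x
  have I1 := gq_integrable hσ x
  have key : ∀ a, 0 ≤ f a * g a - f a * GG σ g x - g a * GG σ f x + GG σ (fun z => f z * g z) x := by
    intro a
    have h0 : 0 ≤ ∫ b, gq σ (x - b) * ((f a - f b) * (g a - g b)) :=
      integral_nonneg fun b => mul_nonneg (gq_pos hσ _).le (hfg a b)
    have e : (fun b => gq σ (x - b) * ((f a - f b) * (g a - g b))) = fun b =>
        ((f a * g a) * gq σ (x - b) - f a * (gq σ (x - b) * g b)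
          - g a * (gq σ (x - b) * f b)) + gq σ (x - b) * (f b * g b) := by
      funext b; ring
    rw [e, integral_four (I1.const_mul _) (Ig.const_mul _) (If.const_mul _) Ip, integral_const_mul, integral_const_mul,
      integral_const_mul, gq_integral hσ, mul_one] at h0
    exact h0
  have h0 : 0 ≤ ∫ a, gq σ (x - a) *
      (f a * g a - f a * GG σ g x - g a * GG σ f x + GG σ (fun z => f z * g z) x) :=
    integral_nonneg fun b => mul_nonneg (gq_pos hσ _).le (key b)
  have e : (fun a => gq σ (x - a) *
      (f a * g a - f a * GG σ g x - g a * GG σ f x + GG σ (fun z => f z * g z) x)) = fun a =>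
        (gq σ (x - a) * (f a * g a) - GG σ g x * (gq σ (x - a) * f a)
          - GG σ f x * (gq σ (x - a) * g a)) + GG σ (fun z => f z * g z) x * gq σ (x - a) := by
    funext a; ring
  rw [e, integral_four Ip (If.const_mul _) (Ig.const_mul _) (I1.const_mul _), integral_const_mul, integral_const_mul,
    integral_const_mul, gq_integral hσ, mul_one] at h0
  change 0 ≤ GG σ (fun z => f z * g z) x - GG σ g x * GG σ f x - GG σ f x * GG σ g x
    + GG σ (fun z => f z * g z) x at h0
  nlinarith

/-! ## Facts on the truncated expectations -/

/-- What is needed of the truncated expectations. -/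
structure Facts (E m M : ℝ) (fm pm fp pp : ℝ → ℝ) : Prop where
  mE : m < E
  EM : E < M
  pm_mono : Monotone pm
  pm_nonneg : ∀ y, 0 ≤ pm y
  pp_nonneg : ∀ y, 0 ≤ pp y
  pp_eq : ∀ y, pp y = 1 - pm y
  fp_eq : ∀ y, fp y = E - fm y
  fm_lo : ∀ y, m * pm y ≤ fm y
  fm_hi : ∀ y, fm y ≤ y * pm y
  fm_hiM : ∀ y, fm y ≤ M * pm y
  fm_hiE : ∀ y, fm y ≤ E * pm y
  fp_lo : ∀ y, m * pp y ≤ fp y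
  fp_hi : ∀ y, fp y ≤ M * pp y
  inc : ∀ y1 y2, y1 ≤ y2 → y1 * (pm y2 - pm y1) ≤ fm y2 - fm y1
  pm_pos : ∀ y, m < y → 0 < pm y
  pp_pos : ∀ y, y < M → 0 < pp y
  fm_meas : Measurable fm
  strict : fm E < E * pm E

section prob
variable {Ω : Type*} [MeasurableSpace Ω] (P : Measure Ω) [IsProbabilityMeasure P]
    (V : Ω → ℝ) (hVmeas : Measurable V) (hV : Integrable V P)

lemma le_set_meas {V : Ω → ℝ} (hVmeas : Measurable V) (y : ℝ) : MeasurableSet {ω | V ω ≤ y} :=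
  measurableSet_le hVmeas measurable_const

lemma ind_integrable {V : Ω → ℝ} (hVmeas : Measurable V) (hV : Integrable V P) (y c : ℝ) :
    Integrable (fun ω => if V ω ≤ y then V ω - c else 0) P := by
  have : (fun ω => if V ω ≤ y then V ω - c else 0) =
      {ω | V ω ≤ y}.indicator (fun ω => V ω - c) := by
    funext ω; simp [Set.indicator]
  rw [this]
  exact (hV.sub (integrable_const c)).indicator (le_set_meas hVmeas y)

lemma Phim_sub {V : Ω → ℝ} (hVmeas : Measurable V) (hV : Integrable V P) (y c : ℝ) :
    Phim P V y - c * Pim P V y = ∫ ω, (if V ω ≤ y then V ω - c else 0) ∂P := by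
  have : (fun ω => if V ω ≤ y then V ω - c else 0) =
      {ω | V ω ≤ y}.indicator (fun ω => V ω - c) := by
    funext ω; simp [Set.indicator]
  rw [this, integral_indicator (le_set_meas hVmeas y),
    integral_sub hV.integrableOn (integrable_const c)]
  simp [Phim, Pim, Measure.real, mul_comm]

lemma Pip_eq {V : Ω → ℝ} (hVmeas : Measurable V) (y : ℝ) : Pip P V y = 1 - Pim P V y := by
  have h := probReal_compl_eq_one_sub (μ := P) (le_set_meas hVmeas y)
  have e : {ω | V ω ≤ y}ᶜ = {ω | V ω > y} := by ext ω; simp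
  rw [e] at h
  exact h

lemma Phip_eq {V : Ω → ℝ} (hVmeas : Measurable V) (hV : Integrable V P) (y : ℝ) :
    Phip P V y = (∫ ω, V ω ∂P) - Phim P V y := by
  have h := integral_add_compl (le_set_meas hVmeas y) hV
  have e : {ω | V ω ≤ y}ᶜ = {ω | V ω > y} := by ext ω; simp
  rw [e] at h
  unfold Phip Phim
  linarith

lemma EV_sub {V : Ω → ℝ} (hV : Integrable V P) (c : ℝ) :
    ∫ ω, (V ω - c) ∂P = (∫ ω, V ω ∂P) - c := by
  rw [integral_sub hV (integrable_const c)]; simp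

lemma facts {V : Ω → ℝ} (hVmeas : Measurable V) (hV : Integrable V P)
    {m M : ℝ} (hsupp : SuppIoo P V m M) :
    Facts (∫ ω, V ω ∂P) m M (Phim P V) (Pim P V) (Phip P V) (Pip P V) := by
  obtain ⟨hmM, hae, hpp, hpm⟩ := hsupp
  have I := ind_integrable P hVmeas hV
  have Ic : ∀ c, Integrable (fun ω => V ω - c) P := fun c => hV.sub (integrable_const c)
  have mE : m < ∫ ω, V ω ∂P := by
    have h0 : 0 ≤ᵐ[P] fun ω => V ω - m := by
      filter_upwards [hae] with ω h; simpa using h.1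
    have h1 := integral_nonneg_of_ae h0
    rw [EV_sub P hV] at h1
    refine lt_of_le_of_ne (by linarith) fun hEq => ?_
    have h2 : ∫ ω, (V ω - m) ∂P = 0 := by rw [EV_sub P hV]; linarith
    rw [integral_eq_zero_iff_of_nonneg_ae h0 (Ic m)] at h2
    have h3 : P {ω | V ω > m} = 0 := by
      refine measure_mono_null ?_ (ae_iff.1 h2)
      intro ω h
      simp only [mem_ofPred_eq, Pi.zero_apply] at h ⊢
      intro; linarith
    exact (hpp m hmM).ne' h3
  have EM : ∫ ω, V ω ∂P < M := by
    have h0 : 0 ≤ᵐ[P] fun ω => M - V ω := by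
      filter_upwards [hae] with ω h; simpa using h.2
    have e : ∫ ω, (M - V ω) ∂P = M - ∫ ω, V ω ∂P := by
      rw [integral_sub (integrable_const M) hV]; simp
    have h1 := integral_nonneg_of_ae h0
    rw [e] at h1
    refine lt_of_le_of_ne (by linarith) fun hEq => ?_
    have h2 : ∫ ω, (M - V ω) ∂P = 0 := by rw [e]; linarith
    rw [integral_eq_zero_iff_of_nonneg_ae h0 ((integrable_const M).sub hV)] at h2
    have h3 : P {ω | V ω ≤ (m + M) / 2} = 0 := by
      refine measure_mono_null ?_ (ae_iff.1 h2)
      intro ω h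
      simp only [mem_ofPred_eq, Pi.zero_apply] at h ⊢
      intro; linarith
    exact (hpm ((m + M) / 2) (by linarith)).ne' h3
  have pmono : Monotone (Pim P V) := by
    intro a b hab
    refine ENNReal.toReal_mono (measure_ne_top _ _) (measure_mono ?_)
    intro ω h
    exact le_trans h hab
  have fm_lo : ∀ y, m * Pim P V y ≤ Phim P V y := by
    intro y
    have : 0 ≤ Phim P V y - m * Pim P V y := by
      rw [Phim_sub P hVmeas hV]
      refine integral_nonneg_of_ae ?_
      filter_upwards [hae] with ω h
      have := h.1
      simp only [Pi.zero_apply]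
      split_ifs <;> linarith
    linarith
  have fm_hi : ∀ y, Phim P V y ≤ y * Pim P V y := by
    intro y
    have : Phim P V y - y * Pim P V y ≤ 0 := by
      rw [Phim_sub P hVmeas hV]
      refine integral_nonpos fun ω => ?_
      simp only [Pi.zero_apply]
      split_ifs <;> linarith
    linarith
  have fm_hiM : ∀ y, Phim P V y ≤ M * Pim P V y := by
    intro y
    have : Phim P V y - M * Pim P V y ≤ 0 := by
      rw [Phim_sub P hVmeas hV]
      refine integral_nonpos_of_ae ?_
      filter_upwards [hae] with ω h
      have := h.2
      simp only [Pi.zero_apply]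
      split_ifs <;> linarith
    linarith
  have hy : ∀ y, Phim P V y - y * Pim P V y ≤ (∫ ω, V ω ∂P) - y := by
    intro y
    rw [Phim_sub P hVmeas hV, ← EV_sub P hV]
    refine integral_mono (I y y) (Ic y) fun ω => ?_
    dsimp only
    split_ifs <;> linarith
  refine ⟨mE, EM, pmono, fun y => ENNReal.toReal_nonneg, fun y => ENNReal.toReal_nonneg,
    Pip_eq P hVmeas, Phip_eq P hVmeas hV, fm_lo, fm_hi, fm_hiM, ?_, ?_, ?_, ?_, ?_, ?_, ?_, ?_⟩
  · intro y
    have p0 : 0 ≤ Pim P V y := ENNReal.toReal_nonneg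
    have p1 : 0 ≤ 1 - Pim P V y := by rw [← Pip_eq P hVmeas]; exact ENNReal.toReal_nonneg
    rcases le_total y (∫ ω, V ω ∂P) with h | h
    · exact (fm_hi y).trans (mul_le_mul_of_nonneg_right h p0)
    · have := hy y
      nlinarith
  · intro y
    rw [Pip_eq P hVmeas, Phip_eq P hVmeas hV]
    have : Phim P V y - m * Pim P V y ≤ (∫ ω, V ω ∂P) - m := by
      rw [Phim_sub P hVmeas hV, ← EV_sub P hV]
      refine integral_mono_ae (I y m) (Ic m) ?_
      filter_upwards [hae] with ω h
      have := h.1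
      split_ifs <;> linarith
    linarith
  · intro y
    rw [Pip_eq P hVmeas, Phip_eq P hVmeas hV]
    have : (∫ ω, V ω ∂P) - M ≤ Phim P V y - M * Pim P V y := by
      rw [Phim_sub P hVmeas hV, ← EV_sub P hV]
      refine integral_mono_ae (Ic M) (I y M) ?_
      filter_upwards [hae] with ω h
      have := h.2
      split_ifs <;> linarith
    linarith
  · intro y1 y2 h12
    have : Phim P V y1 - y1 * Pim P V y1 ≤ Phim P V y2 - y1 * Pim P V y2 := by
      rw [Phim_sub P hVmeas hV, Phim_sub P hVmeas hV]
      refine integral_mono (I y1 y1) (I y2 y1) fun ω => ?_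
      dsimp only
      split_ifs <;> linarith
    linarith
  · intro y h
    exact ENNReal.toReal_pos (hpm y h).ne' (measure_ne_top _ _)
  · intro y h
    exact ENNReal.toReal_pos (hpp y h).ne' (measure_ne_top _ _)
  · have hmon : Monotone (fun y => Phim P V y - m * Pim P V y) := by
      intro y1 y2 h12
      dsimp only
      rw [Phim_sub P hVmeas hV, Phim_sub P hVmeas hV]
      refine integral_mono_ae (I y1 m) (I y2 m) ?_
      filter_upwards [hae] with ω h
      have := h.1
      split_ifs <;> linarith
    have := hmon.measurable.add (pmono.measurable.const_mul m)
    convert this using 1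
    funext y; simp
  · set E := ∫ ω, V ω ∂P with hE
    refine lt_of_le_of_ne (fm_hi E) fun hEq => ?_
    have h0 : 0 ≤ᵐ[P] fun ω => (V ω - E) - (if V ω ≤ E then V ω - E else 0) := by
      refine Eventually.of_forall fun ω => ?_
      simp only [Pi.zero_apply]
      split_ifs <;> linarith
    have h2 : ∫ ω, ((V ω - E) - (if V ω ≤ E then V ω - E else 0)) ∂P = 0 := by
      rw [integral_sub (Ic E) (I E E), EV_sub P hV, ← Phim_sub P hVmeas hV, hEq]
      simp [hE]
    rw [integral_eq_zero_iff_of_nonneg_ae h0 ((Ic E).sub (I E E))] at h2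
    have h3 : P {ω | V ω > E} = 0 := by
      refine measure_mono_null ?_ (ae_iff.1 h2)
      intro ω h
      simp only [mem_ofPred_eq, Pi.zero_apply] at h ⊢
      rw [if_neg (not_le.2 h)]
      intro; linarith
    exact (hpp E EM).ne' h3
end prob

/-! ## The comparison operator -/

section abs
variable {E m M : ℝ} {fm pm fp pp : ℝ → ℝ}

/-- Corrected conditional expectation. -/
noncomputable def Psit (m : ℝ) (fm pm : ℝ → ℝ) (y : ℝ) : ℝ := if y ≤ m then m else fm y / pm y

lemma Psit_lo (fc : Facts E m M fm pm fp pp) (y : ℝ) : m ≤ Psit m fm pm y := by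
  unfold Psit
  split_ifs with h
  · exact le_rfl
  · rw [le_div_iff₀ (fc.pm_pos y (not_le.1 h))]; exact fc.fm_lo y

lemma Psit_hi (fc : Facts E m M fm pm fp pp) (y : ℝ) : Psit m fm pm y ≤ E := by
  unfold Psit
  split_ifs with h
  · exact fc.mE.le
  · rw [div_le_iff₀ (fc.pm_pos y (not_le.1 h))]; exact fc.fm_hiE y

lemma Psit_mono (fc : Facts E m M fm pm fp pp) : Monotone (Psit m fm pm) := by
  intro a b hab
  by_cases ha : a ≤ m
  · have : Psit m fm pm a = m := by simp [Psit, ha]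
    rw [this]; exact Psit_lo fc b
  · have hb : ¬ b ≤ m := fun h => ha (hab.trans h)
    simp only [Psit, ha, hb, if_false]
    rw [div_le_div_iff₀ (fc.pm_pos a (not_le.1 ha)) (fc.pm_pos b (not_le.1 hb))]
    have h1 := fc.inc a b hab
    have h2 := fc.fm_hi a
    have h3 := fc.pm_mono hab
    have h4 := fc.pm_nonneg a
    have h5 := mul_le_mul_of_nonneg_right h1 h4
    have h6 := mul_le_mul_of_nonneg_right h2 (sub_nonneg.2 h3)
    nlinarith

lemma Psit_mul (fc : Facts E m M fm pm fp pp) (y : ℝ) : Psit m fm pm y * pm y ≤ fm y := by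
  unfold Psit
  split_ifs with h
  · exact fc.fm_lo y
  · rw [div_mul_cancel₀ _ (fc.pm_pos y (not_le.1 h)).ne']

/-- Bounded between two constants -/
lemma BM.of_mem {f : ℝ → ℝ} (hf : Measurable f) {a b : ℝ} (h : ∀ x, a ≤ f x ∧ f x ≤ b) : BM f :=
  ⟨hf, max |a| |b|, fun x => abs_le_max_abs_abs (h x).1 (h x).2⟩

lemma Psit_BM (fc : Facts E m M fm pm fp pp) {l : ℝ → ℝ} (hl : Measurable l) :
    BM (fun y => Psit m fm pm (l y)) :=
  BM.of_mem ((Psit_mono fc).measurable.comp hl) (fun _ => ⟨Psit_lo fc _, Psit_hi fc _⟩)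

/-- right-hand side profile -/
noncomputable def HH (σ E : ℝ) (f : ℝ → ℝ) (z : ℝ) : ℝ := if 0 ≤ z then E else GG σ f z

lemma HH_BM {σ : ℝ} (hσ : 0 < σ) (E : ℝ) {f : ℝ → ℝ} (hf : BM f) : BM (HH σ E f) := by
  obtain ⟨h1, C, hC⟩ := GG_BM hσ hf
  refine ⟨Measurable.ite measurableSet_Ici measurable_const h1, max |E| C, fun x => ?_⟩
  unfold HH
  split_ifs
  · exact le_max_left _ _
  · exact (hC x).trans (le_max_right _ _)

lemma HH_mono {σ : ℝ} (hσ : 0 < σ) (E : ℝ) {f g : ℝ → ℝ} (hf : BM f) (hg : BM g)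
    (h : ∀ z, f z ≤ g z) (z : ℝ) : HH σ E f z ≤ HH σ E g z := by
  unfold HH
  split_ifs
  · exact le_rfl
  · exact GG_mono hσ hf hg h z

lemma HH_le {σ : ℝ} (hσ : 0 < σ) (E : ℝ) {f : ℝ → ℝ} (hf : BM f)
    (h : ∀ z, f z ≤ E) (z : ℝ) : HH σ E f z ≤ E := by
  unfold HH
  split_ifs
  · exact le_rfl
  · rw [← GG_const hσ E z]; exact GG_mono hσ hf (BM.const E) h z

lemma HH_ge {σ : ℝ} (hσ : 0 < σ) {m E : ℝ} (hmE : m ≤ E) {f : ℝ → ℝ} (hf : BM f)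
    (h : ∀ z, m ≤ f z) (z : ℝ) : m ≤ HH σ E f z := by
  unfold HH
  split_ifs
  · exact hmE
  · rw [← GG_const hσ m z]; exact GG_mono hσ (BM.const m) hf h z

lemma HH_monotone {σ : ℝ} (hσ : 0 < σ) (E : ℝ) {f : ℝ → ℝ} (hf : BM f)
    (h : ∀ z, f z ≤ E) (hm : Monotone f) : Monotone (HH σ E f) := by
  intro a b hab
  by_cases hb : 0 ≤ b
  · have : HH σ E f b = E := by simp [HH, hb]
    rw [this]; exact HH_le hσ E hf h a
  · have ha : ¬ 0 ≤ a := fun h => hb (h.trans hab)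
    simp only [HH, ha, hb, if_false]
    exact GG_monotone hσ hf hm hab

lemma Cm_rhs {σ : ℝ} (hσ : 0 < σ) (N : ℕ) (E : ℝ) {f : ℝ → ℝ} (hf : BM f) (x : ℝ) :
    E * (∫ z in Set.Ioi (0:ℝ), KK σ N x z) +
      ∫ z in Set.Iio (0:ℝ), KK σ N x z * ∫ y, f y * gq σ (z - y) = AA σ N (HH σ E f) x := by
  have hI := AA_integrable hσ N (HH_BM hσ E hf) x
  unfold AA
  rw [← integral_add_compl (measurableSet_Iio (a := (0:ℝ))) hI, compl_Iio,
    integral_Ici_eq_integral_Ioi, add_comm]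
  congr 1
  · refine setIntegral_congr_fun measurableSet_Iio fun z hz => ?_
    have : ¬ (0:ℝ) ≤ z := not_le.2 hz
    simp only [HH, this, if_false, GG]
    simp_rw [mul_comm (f _)]
  · rw [← integral_const_mul]
    refine setIntegral_congr_fun measurableSet_Ioi fun z hz => ?_
    have : (0:ℝ) ≤ z := le_of_lt hz
    simp only [HH, this, if_true, mul_comm]

/-- comparison operator -/
noncomputable def TT (σ : ℝ) (N : ℕ) (E m : ℝ) (fm pm : ℝ → ℝ) (l : ℝ → ℝ) : ℝ → ℝ :=
  AA σ N (HH σ E (fun y => Psit m fm pm (l y)))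

lemma TT_mono (fc : Facts E m M fm pm fp pp) {σ : ℝ} (hσ : 0 < σ) {N : ℕ} (hN : 1 ≤ N)
    {f g : ℝ → ℝ} (hf : Measurable f) (hg : Measurable g) (h : ∀ x, f x ≤ g x) (x : ℝ) :
    TT σ N E m fm pm f x ≤ TT σ N E m fm pm g x :=
  AA_mono hσ hN (HH_BM hσ E (Psit_BM fc hf)) (HH_BM hσ E (Psit_BM fc hg))
    (HH_mono hσ E (Psit_BM fc hf) (Psit_BM fc hg) fun z => Psit_mono fc (h z)) x

lemma TT_monotone (fc : Facts E m M fm pm fp pp) {σ : ℝ} (hσ : 0 < σ) {N : ℕ} (hN : 1 ≤ N)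
    {f : ℝ → ℝ} (hf : Monotone f) : Monotone (TT σ N E m fm pm f) :=
  AA_monotone hσ hN (HH_BM hσ E (Psit_BM fc hf.measurable))
    (HH_monotone hσ E (Psit_BM fc hf.measurable) (fun _ => Psit_hi fc _) ((Psit_mono fc).comp hf))

lemma TT_le (fc : Facts E m M fm pm fp pp) {σ : ℝ} (hσ : 0 < σ) {N : ℕ} (hN : 1 ≤ N)
    {f : ℝ → ℝ} (hf : Measurable f) (x : ℝ) : TT σ N E m fm pm f x ≤ E := by
  have := AA_mono hσ hN (HH_BM hσ E (Psit_BM fc hf)) (BM.const E)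
    (HH_le hσ E (Psit_BM fc hf) fun _ => Psit_hi fc _) x
  rwa [AA_const hσ hN] at this

lemma TT_gt (fc : Facts E m M fm pm fp pp) {σ : ℝ} (hσ : 0 < σ) {N : ℕ} (hN : 1 ≤ N)
    {f : ℝ → ℝ} (hf : Measurable f) (x : ℝ) : m < TT σ N E m fm pm f x := by
  refine AA_pos hσ hN (HH_BM hσ E (Psit_BM fc hf))
    (HH_ge hσ fc.mE.le (Psit_BM fc hf) fun _ => Psit_lo fc _) (fun z hz => ?_) x
  simpa [HH, hz] using fc.mE

/-- Least monotone supersolution is a fixed point (Knaster–Tarski). -/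
lemma exists_lfp (fc : Facts E m M fm pm fp pp) {σ : ℝ} (hσ : 0 < σ) {N : ℕ} (hN : 1 ≤ N) :
    ∃ l : ℝ → ℝ, Monotone l ∧ (∀ x, l x ∈ Icc m M) ∧ (∀ x, l x = TT σ N E m fm pm l x) ∧
      ∀ L : ℝ → ℝ, Monotone L → (∀ x, L x ∈ Icc m M) → (∀ x, TT σ N E m fm pm L x ≤ L x) →
        ∀ x, l x ≤ L x := by
  let S : Set (ℝ → ℝ) := {L | Monotone L ∧ (∀ x, L x ∈ Icc m M) ∧
    ∀ x, TT σ N E m fm pm L x ≤ L x}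
  let l : ℝ → ℝ := fun x => sInf ((fun L : ℝ → ℝ => L x) '' S)
  have hmM : m ≤ M := (fc.mE.trans fc.EM).le
  have hMS : (fun _ => M) ∈ S := ⟨monotone_const, fun _ => ⟨hmM, le_rfl⟩,
    fun x => (TT_le fc hσ hN measurable_const x).trans fc.EM.le⟩
  have hbdd : ∀ x, BddBelow ((fun L : ℝ → ℝ => L x) '' S) := by
    rintro x
    refine ⟨m, ?_⟩
    rintro _ ⟨L, hL, rfl⟩
    exact (hL.2.1 x).1
  have hle : ∀ L ∈ S, ∀ x, l x ≤ L x := fun L hL x => csInf_le (hbdd x) ⟨L, hL, rfl⟩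
  have hge : ∀ x c, (∀ L ∈ S, c ≤ L x) → c ≤ l x := by
    intro x c h
    refine le_csInf ⟨M, fun _ => M, hMS, rfl⟩ ?_
    rintro _ ⟨L, hL, rfl⟩
    exact h L hL
  have hmono : Monotone l := fun x y hxy =>
    hge y _ fun L hL => (hle L hL x).trans (hL.1 hxy)
  have hmem : ∀ x, l x ∈ Icc m M := fun x =>
    ⟨hge x _ fun L hL => (hL.2.1 x).1, hle _ hMS x⟩
  have h1 : ∀ x, TT σ N E m fm pm l x ≤ l x := fun x => hge x _ fun L hL =>
    (TT_mono fc hσ hN hmono.measurable hL.1.measurable (hle L hL) x).trans (hL.2.2 x)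
  have hT : Monotone (TT σ N E m fm pm l) := TT_monotone fc hσ hN hmono
  have hTS : TT σ N E m fm pm l ∈ S := ⟨hT, fun x =>
    ⟨(TT_gt fc hσ hN hmono.measurable x).le, (TT_le fc hσ hN hmono.measurable x).trans fc.EM.le⟩,
    TT_mono fc hσ hN hT.measurable hmono.measurable h1⟩
  exact ⟨l, hmono, hmem, fun x => le_antisymm (hle _ hTS x) (h1 x),
    fun L a b c => hle L ⟨a, b, c⟩⟩

/-- A bounded, possibly non-monotone supersolution dominates the least fixed point. -/
lemma lfp_le (fc : Facts E m M fm pm fp pp) {σ : ℝ} (hσ : 0 < σ) {N : ℕ} (hN : 1 ≤ N)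
    {l : ℝ → ℝ}
    (hl : ∀ L : ℝ → ℝ, Monotone L → (∀ x, L x ∈ Icc m M) → (∀ x, TT σ N E m fm pm L x ≤ L x) →
        ∀ x, l x ≤ L x) {F : ℝ → ℝ} (hF : Measurable F) (hmem : ∀ x, F x ∈ Icc m M)
    (hsup : ∀ x, TT σ N E m fm pm F x ≤ F x) (x : ℝ) : l x ≤ F x := by
  let G : ℝ → ℝ := fun x => sInf (F '' Ici x)
  have hbdd : ∀ x, BddBelow (F '' Ici x) := by
    rintro x
    refine ⟨m, ?_⟩
    rintro _ ⟨y, -, rfl⟩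
    exact (hmem y).1
  have hle : ∀ x y, x ≤ y → G x ≤ F y := fun x y h => csInf_le (hbdd x) ⟨y, h, rfl⟩
  have hge : ∀ x c, (∀ y, x ≤ y → c ≤ F y) → c ≤ G x := by
    intro x c h
    refine le_csInf ⟨F x, x, self_mem_Ici, rfl⟩ ?_
    rintro _ ⟨y, hy, rfl⟩
    exact h y hy
  have hmono : Monotone G := fun a b hab => hge b _ fun y hy => hle a y (hab.trans hy)
  have hT := TT_monotone fc hσ hN hmono
  refine (hl G hmono (fun a => ⟨hge a _ fun y _ => (hmem y).1, (hle a a le_rfl).trans (hmem a).2⟩)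
    (fun a => hge a _ fun y hy => ?_) x).trans (hle x x le_rfl)
  exact (hT hy).trans ((TT_mono fc hσ hN hmono.measurable hF (fun z => hle z z le_rfl) y).trans
    (hsup y))

lemma ratio_bound {n d C : ℝ} (hd : 0 ≤ d) (hC : 0 ≤ C) (h : |n| ≤ C * d) : |n / d| ≤ C := by
  rcases hd.eq_or_lt with h0 | h0
  · rw [← h0]; simpa using hC
  · rw [abs_div, abs_of_pos h0, div_le_iff₀ h0]; exact h

lemma GG_abs_le {σ : ℝ} (hσ : 0 < σ) {f g : ℝ → ℝ} (hf : BM f) (hg : BM g) {C : ℝ}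
    (h : ∀ z, |f z| ≤ C * g z) (x : ℝ) : |GG σ f x| ≤ C * GG σ g x := by
  have e : C * GG σ g x = ∫ z, C * (gq σ (x - z) * g z) := by
    rw [integral_const_mul]; rfl
  rw [e]
  refine norm_integral_le_of_norm_le (f := fun z => gq σ (x - z) * f z)
    ((GG_integrable hσ hg x).const_mul C) (Eventually.of_forall fun z => ?_)
  rw [Real.norm_eq_abs, abs_mul, abs_of_pos (gq_pos hσ _)]
  have := mul_le_mul_of_nonneg_left (h z) (gq_pos hσ (x - z)).le
  linarith

lemma GG_zero {σ : ℝ} (hσ : 0 < σ) {f : ℝ → ℝ} (hf : BM f) (h0 : ∀ z, 0 ≤ f z) {x : ℝ}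
    (h : GG σ f x = 0) : ∀ᵐ z, f z = 0 := by
  unfold GG at h
  rw [integral_eq_zero_iff_of_nonneg (fun z => mul_nonneg (gq_pos hσ _).le (h0 z))
    (GG_integrable hσ hf x)] at h
  filter_upwards [h] with z hz
  have := (gq_pos hσ (x - z)).ne'
  simpa [this] using hz

lemma GG_congr {σ : ℝ} {f g : ℝ → ℝ} (h : ∀ᵐ z, f z = g z) (x : ℝ) : GG σ f x = GG σ g x := by
  refine integral_congr_ae ?_
  filter_upwards [h] with z hz
  rw [hz]

lemma GG_nonneg {σ : ℝ} (hσ : 0 < σ) {f : ℝ → ℝ} (h0 : ∀ z, 0 ≤ f z) (x : ℝ) : 0 ≤ GG σ f x :=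
  integral_nonneg fun z => mul_nonneg (gq_pos hσ _).le (h0 z)

/-- The function `φ_F`. -/
noncomputable def PP (σ : ℝ) (fm pm fp pp : ℝ → ℝ) (F : ℝ → ℝ) (x : ℝ) : ℝ :=
  if 0 ≤ x then GG σ (fun z => fp (F z)) x / GG σ (fun z => pp (F z)) x
  else GG σ (fun z => fm (F z)) x / GG σ (fun z => pm (F z)) x

lemma supersol (fc : Facts E m M fm pm fp pp) {σ : ℝ} (hσ : 0 < σ) {N : ℕ} (hN : 1 ≤ N)
    {F : ℝ → ℝ} (hmem : ∀ x, F x ∈ Icc m M)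
    (hF : ∀ x, F x = AA σ N (PP σ fm pm fp pp F) x) :
    Measurable F ∧ ∀ x, TT σ N E m fm pm F x ≤ F x := by
  have hFm : Measurable F := by
    have : F = AA σ N (PP σ fm pm fp pp F) := funext hF
    rw [this]; exact AA_measurable hσ hN _
  refine ⟨hFm, ?_⟩
  have hpm1 : ∀ y, pm y ≤ 1 := fun y => by
    have := fc.pp_nonneg y; rw [fc.pp_eq] at this; linarith
  have hpp1 : ∀ y, pp y ≤ 1 := fun y => by
    have := fc.pm_nonneg y; have := fc.pp_eq y; linarith
  set C := max |m| |M| with hC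
  have hC0 : 0 ≤ C := (abs_nonneg m).trans (le_max_left _ _)
  have hCm : -C ≤ m := by have := neg_abs_le m; have := le_max_left |m| |M|; linarith
  have hCM : M ≤ C := by have := le_abs_self M; have := le_max_right |m| |M|; linarith
  have hfmC : ∀ y, |fm y| ≤ C * pm y := fun y => by
    have h1 := fc.fm_lo y
    have h2 := fc.fm_hiM y
    have h3 := mul_le_mul_of_nonneg_right hCm (fc.pm_nonneg y)
    have h4 := mul_le_mul_of_nonneg_right hCM (fc.pm_nonneg y)
    exact abs_le.2 ⟨by linarith, by linarith⟩
  have hfpC : ∀ y, |fp y| ≤ C * pp y := fun y => by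
    have h1 := fc.fp_lo y
    have h2 := fc.fp_hi y
    have h3 := mul_le_mul_of_nonneg_right hCm (fc.pp_nonneg y)
    have h4 := mul_le_mul_of_nonneg_right hCM (fc.pp_nonneg y)
    exact abs_le.2 ⟨by linarith, by linarith⟩
  have ppm : Measurable pp := by
    have : pp = fun y => 1 - pm y := funext fc.pp_eq
    rw [this]; exact measurable_const.sub fc.pm_mono.measurable
  have fpm : Measurable fp := by
    have : fp = fun y => E - fm y := funext fc.fp_eq
    rw [this]; exact measurable_const.sub fc.fm_meas
  have Bpm : BM (fun z => pm (F z)) :=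
    BM.of_mem (fc.pm_mono.measurable.comp hFm) (fun x => ⟨fc.pm_nonneg _, hpm1 _⟩)
  have Bpp : BM (fun z => pp (F z)) :=
    BM.of_mem (ppm.comp hFm) (fun x => ⟨fc.pp_nonneg _, hpp1 _⟩)
  have Bfm : BM (fun z => fm (F z)) := ⟨fc.fm_meas.comp hFm, C, fun z =>
    (hfmC _).trans (mul_le_of_le_one_right hC0 (hpm1 _))⟩
  have Bfp : BM (fun z => fp (F z)) := ⟨fpm.comp hFm, C, fun z =>
    (hfpC _).trans (mul_le_of_le_one_right hC0 (hpp1 _))⟩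
  have BPP : BM (PP σ fm pm fp pp F) := by
    refine ⟨Measurable.ite measurableSet_Ici ((GG_measurable Bfp.1).div (GG_measurable Bpp.1))
      ((GG_measurable Bfm.1).div (GG_measurable Bpm.1)), C, fun x => ?_⟩
    unfold PP
    split_ifs
    · exact ratio_bound (GG_nonneg hσ (fun z => fc.pp_nonneg _) x) hC0
        (GG_abs_le hσ Bfp Bpp (fun z => hfpC _) x)
    · exact ratio_bound (GG_nonneg hσ (fun z => fc.pm_nonneg _) x) hC0
        (GG_abs_le hσ Bfm Bpm (fun z => hfmC _) x)
  have Dp : ∀ x, 0 < GG σ (fun z => pp (F z)) x := by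
    intro x
    refine lt_of_le_of_ne (GG_nonneg hσ (fun z => fc.pp_nonneg _) x) fun h0 => ?_
    have hz := GG_zero hσ Bpp (fun z => fc.pp_nonneg _) h0.symm
    have e : ∀ y, y < 0 → PP σ fm pm fp pp F y = E := by
      intro y hy
      unfold PP
      rw [if_neg (not_le.2 hy)]
      have e1 : ∀ᵐ z, fm (F z) = E := by
        filter_upwards [hz] with z hz
        have h1 := fc.fp_lo (F z)
        have h2 := fc.fp_hi (F z)
        rw [hz] at h1 h2
        have := fc.fp_eq (F z)
        linarith
      have e2 : ∀ᵐ z, pm (F z) = 1 := by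
        filter_upwards [hz] with z hz
        have := fc.pp_eq (F z)
        linarith
      rw [GG_congr e1, GG_congr e2, GG_const hσ, GG_const hσ, div_one]
    have ht : Tendsto F atBot (nhds E) := by
      have : F = AA σ N (PP σ fm pm fp pp F) := funext hF
      rw [this]
      refine AA_tendsto_bot hσ hN BPP (tendsto_const_nhds.congr' ?_)
      filter_upwards [eventually_lt_atBot 0] with y hy
      exact (e y hy).symm
    obtain ⟨R, hR⟩ := eventually_atBot.1 (ht.eventually (gt_mem_nhds fc.EM))
    have hnull : volume (Iic R) = 0 := by
      refine measure_mono_null ?_ (ae_iff.1 hz)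
      intro y hy
      exact (fc.pp_pos _ (hR y hy)).ne'
    simp at hnull
  have Dm : ∀ x, 0 < GG σ (fun z => pm (F z)) x := by
    intro x
    refine lt_of_le_of_ne (GG_nonneg hσ (fun z => fc.pm_nonneg _) x) fun h0 => ?_
    have hz := GG_zero hσ Bpm (fun z => fc.pm_nonneg _) h0.symm
    have e : ∀ y, 0 ≤ y → PP σ fm pm fp pp F y = E := by
      intro y hy
      unfold PP
      rw [if_pos hy]
      have e1 : ∀ᵐ z, fp (F z) = E := by
        filter_upwards [hz] with z hz
        have h1 := fc.fm_lo (F z)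
        have h2 := fc.fm_hiM (F z)
        rw [hz] at h1 h2
        have := fc.fp_eq (F z)
        linarith
      have e2 : ∀ᵐ z, pp (F z) = 1 := by
        filter_upwards [hz] with z hz
        have := fc.pp_eq (F z)
        linarith
      rw [GG_congr e1, GG_congr e2, GG_const hσ, GG_const hσ, div_one]
    have ht : Tendsto F atTop (nhds E) := by
      have : F = AA σ N (PP σ fm pm fp pp F) := funext hF
      rw [this]
      refine AA_tendsto_top hσ hN BPP (tendsto_const_nhds.congr' ?_)
      filter_upwards [eventually_ge_atTop 0] with y hy
      exact (e y hy).symm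
    obtain ⟨R, hR⟩ := eventually_atTop.1 (ht.eventually (lt_mem_nhds fc.mE))
    have hnull : volume (Ici R) = 0 := by
      refine measure_mono_null ?_ (ae_iff.1 hz)
      intro y hy
      exact (fc.pm_pos _ (hR y hy)).ne'
    simp at hnull
  intro x
  rw [hF x]
  refine AA_mono hσ hN (HH_BM hσ E (Psit_BM fc hFm)) BPP (fun z => ?_) x
  unfold HH PP
  split_ifs with hz
  · rw [le_div_iff₀ (Dp z)]
    have e : E * GG σ (fun z => pp (F z)) z = ∫ y, E * (gq σ (z - y) * pp (F y)) := by
      rw [integral_const_mul]; rfl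
    rw [e]
    refine integral_mono ((GG_integrable hσ Bpp z).const_mul E) (GG_integrable hσ Bfp z)
      fun y => ?_
    have h1 : E * pp (F y) ≤ fp (F y) := by
      rw [fc.pp_eq, fc.fp_eq]; have := fc.fm_hiE (F y); linarith
    have := mul_le_mul_of_nonneg_left h1 (gq_pos hσ (z - y)).le
    dsimp only
    linarith
  · rw [le_div_iff₀ (Dm z)]
    have BP := Psit_BM fc hFm
    refine (GG_cheb hσ BP Bpm (fun a b => ?_) z).trans (GG_mono hσ ?_ Bfm (fun y => Psit_mul fc _) z)
    · rcases le_total (F a) (F b) with h | h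
      · exact mul_nonneg_of_nonpos_of_nonpos (sub_nonpos.2 (Psit_mono fc h))
          (sub_nonpos.2 (fc.pm_mono h))
      · exact mul_nonneg (sub_nonneg.2 (Psit_mono fc h)) (sub_nonneg.2 (fc.pm_mono h))
    · obtain ⟨D, hD⟩ := BP.2
      refine ⟨BP.1.mul Bpm.1, D, fun y => ?_⟩
      rw [abs_mul, abs_of_nonneg (fc.pm_nonneg _)]
      exact (mul_le_of_le_one_right (abs_nonneg _) (hpm1 _)).trans (hD y)

end abs

/-- Among nondecreasing functions with values in `[m,M]`, (C⁻) has a minimal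
solution; it is not constant, and it bounds from below every solution of (E) with values in
`[m,M]`. -/
theorem stmt14 {Ω : Type*} [MeasurableSpace Ω] (P : Measure Ω) [IsProbabilityMeasure P]
    (V : Ω → ℝ) (hVmeas : Measurable V) (hV : Integrable V P)
    (m M : ℝ) (hsupp : SuppIoo P V m M)
    (σ : ℝ) (hσ : 0 < σ) (N : ℕ) (hN : 1 ≤ N) :
    ∃ lstar : ℝ → ℝ, Monotone lstar ∧ (∀ x, lstar x ∈ Set.Icc m M) ∧
      SolvesCm P V σ N lstar ∧
      (∀ L : ℝ → ℝ, Monotone L → (∀ x, L x ∈ Set.Icc m M) → SolvesCm P V σ N L →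
        ∀ x, lstar x ≤ L x) ∧
      (¬ ∃ c : ℝ, ∀ x, lstar x = c) ∧
      (∀ F : ℝ → ℝ, (∀ x, F x ∈ Set.Icc m M) → SolvesE P V σ N F →
        ∀ x, lstar x ≤ F x) := by
  have fc := facts P hVmeas hV hsupp
  set E := ∫ ω, V ω ∂P with hE
  have hPsiB : ∀ l : ℝ → ℝ, Measurable l → BM (fun y => Psim P V (l y)) := by
    intro l hl
    refine ⟨(fc.fm_meas.div fc.pm_mono.measurable).comp hl, max |m| |M|, fun x => ?_⟩
    refine ratio_bound (fc.pm_nonneg _) ((abs_nonneg m).trans (le_max_left _ _)) ?_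
    have h1 := fc.fm_lo (l x)
    have h2 := fc.fm_hiM (l x)
    have h0 := fc.pm_nonneg (l x)
    refine (abs_le_max_abs_abs h1 h2).trans ?_
    rw [abs_mul, abs_mul, abs_of_nonneg h0]
    exact max_le (mul_le_mul_of_nonneg_right (le_max_left _ _) h0)
      (mul_le_mul_of_nonneg_right (le_max_right _ _) h0)
  have hCm : ∀ l : ℝ → ℝ, Measurable l → (SolvesCm P V σ N l ↔
      ∀ x, l x = AA σ N (HH σ E (fun y => Psim P V (l y))) x) := by
    intro l hl
    refine forall_congr' fun x => ?_
    rw [← Cm_rhs hσ N E (hPsiB l hl) x]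
    rfl
  have hPsi : ∀ y, m < y → Psim P V y = Psit m (Phim P V) (Pim P V) y := by
    intro y hy
    simp [Psit, Psim, not_le.2 hy]
  obtain ⟨l, lmono, lmem, lfix, lmin⟩ := exists_lfp fc hσ hN
  have lgt : ∀ x, m < l x := fun x => by
    rw [lfix x]; exact TT_gt fc hσ hN lmono.measurable x
  have lsol : ∀ x, l x = AA σ N (HH σ E (fun y => Psim P V (l y))) x := by
    have : (fun y => Psim P V (l y)) = fun y => Psit m (Phim P V) (Pim P V) (l y) :=
      funext fun y => hPsi _ (lgt y)
    rw [this]; exact lfix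
  refine ⟨l, lmono, lmem, (hCm l lmono.measurable).2 lsol, ?_, ?_, ?_⟩
  · intro L Lmono Lmem Lsol
    rw [hCm L Lmono.measurable] at Lsol
    have key : (fun y => Psim P V (L y)) = fun y => Psit m (Phim P V) (Pim P V) (L y) := by
      by_cases h : ∀ x, m < L x
      · exact funext fun y => hPsi _ (h y)
      · push Not at h
        obtain ⟨a, ha⟩ := h
        have hc : ∀ y, y ≤ a → L y = m := fun y hy =>
          le_antisymm ((Lmono hy).trans ha) (Lmem y).1
        have B := hPsiB L Lmono.measurable
        have t1 : Tendsto (fun y => Psim P V (L y)) atBot (nhds (Psim P V m)) := by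
          refine tendsto_const_nhds.congr' ?_
          filter_upwards [eventually_le_atBot a] with y hy
          rw [hc y hy]
        have t2 := GG_tendsto hσ B
          (fun u => tendsto_atBot_add_const_right _ (-u) tendsto_id) t1
        have t3 : Tendsto (HH σ E (fun y => Psim P V (L y))) atBot (nhds (Psim P V m)) := by
          refine t2.congr' ?_
          filter_upwards [eventually_lt_atBot 0] with y hy
          simp [HH, not_le.2 hy]
        have t4 := AA_tendsto_bot hσ hN (HH_BM hσ E B) t3
        have t5 : Tendsto L atBot (nhds (Psim P V m)) := t4.congr fun x => (Lsol x).symm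
        have t6 : Tendsto L atBot (nhds m) := by
          refine tendsto_const_nhds.congr' ?_
          filter_upwards [eventually_le_atBot a] with y hy
          rw [hc y hy]
        have hm : Psim P V m = m := tendsto_nhds_unique t5 t6
        funext y
        rcases (Lmem y).1.eq_or_lt with h | h
        · rw [← h, hm]; simp [Psit]
        · exact hPsi _ h
    rw [key] at Lsol
    exact lmin L Lmono Lmem fun x => (Lsol x).symm.le
  · rintro ⟨c, hc⟩
    have B := hPsiB l lmono.measurable
    have e : (fun y => Psim P V (l y)) = fun _ => Psim P V c := by
      funext y; rw [hc]
    have t1 : Tendsto (HH σ E (fun y => Psim P V (l y))) atTop (nhds E) := by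
      refine tendsto_const_nhds.congr' ?_
      filter_upwards [eventually_ge_atTop 0] with y hy
      simp [HH, hy]
    have t2 : Tendsto (HH σ E (fun y => Psim P V (l y))) atBot (nhds (Psim P V c)) := by
      refine tendsto_const_nhds.congr' ?_
      filter_upwards [eventually_lt_atBot 0] with y hy
      simp only [HH, not_le.2 hy, if_false]
      rw [e, GG_const hσ]
    have t3 := AA_tendsto_top hσ hN (HH_BM hσ E B) t1
    have t4 := AA_tendsto_bot hσ hN (HH_BM hσ E B) t2
    have ec : AA σ N (HH σ E (fun y => Psim P V (l y))) = fun _ => c :=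
      funext fun x => by rw [← lsol x, hc]
    rw [ec] at t3 t4
    have c1 : c = E := tendsto_nhds_unique tendsto_const_nhds t3
    have c2 : c = Psim P V c := tendsto_nhds_unique tendsto_const_nhds t4
    rw [c1] at c2
    have hs := fc.strict
    have hp := fc.pm_pos E fc.mE
    have : Psim P V E < E := by
      unfold Psim; rw [div_lt_iff₀ hp]; exact hs
    exact absurd c2 this.ne'
  · intro F Fmem FE
    have hF : ∀ x, F x = AA σ N (PP σ (Phim P V) (Pim P V) (Phip P V) (Pip P V) F) x := by
      have : phig P V σ F = PP σ (Phim P V) (Pim P V) (Phip P V) (Pip P V) F := by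
        funext x
        simp only [phig, PP, phip, phim, GG, mul_comm]
      intro x
      rw [← this]
      exact FE x
    obtain ⟨Fm, Fs⟩ := supersol fc hσ hN Fmem hF
    exact lfp_le fc hσ hN lmin Fm Fmem Fs
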